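/- Let F : ℝ^n ⇒ ℝ^p and G : ℝ^p ⇒ ℝ^q be nearly convex set-valued mappings with ri(rge F) ∩ ri(dom G) ≠ ∅. Then ri(gph(G ∘ F)) = {(x, z) ∈ ℝ^n × ℝ^q | x ∈ ri(dom F), z ∈ ri(rge G), and ri F(x) ∩ ri G⁻¹(z) ≠ ∅}, where (G ∘ F)(x) = ⋃_{y ∈ F(x)} G(y) and G⁻¹(z) = {y ∈ ℝ^p | z ∈ G(y)}. -/

import Mathlib

/-!
For nearly convex sets in finite dimension, relative interiors are governed by two facts:

* `combo_mem_ri`: a half-open segment from a point `w ∈ ri s` towards a point `v ∈ s` stays in `ri s`;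
* `mem_ri_of_prolong`: `a ∈ s` lies in `ri s` as soon as, for every `x ∈ s`, the segment `[x, a]`
  can be prolonged slightly beyond `a` inside `s` (the converse, `eventually_prolong`, holds for
  every set).

They give `ri (A '' s) = A '' ri s` for linear `A` (`ri_image`) and the description of the relative
interior of a graph by slices: `(x, y) ∈ ri (gph F)` iff `x ∈ ri (domSV F)` and `y ∈ ri (F x)`
(`mem_ri_gph_iff`). By the qualification condition and `ri_image` there is `(x₀, y₀, z₀)` with
`(x₀, y₀) ∈ ri (gph F)` and `(y₀, z₀) ∈ ri (gph G)`. Shrinking towards this point and prolonging away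
from it shows that the graph of the composition is nearly convex, and that its relative interior
consists of the `(x, z)` for which some `y` satisfies `(x, y) ∈ ri (gph F)` and
`(y, z) ∈ ri (gph G)`. Slicing both graphs, the second one after swapping the factors, concludes.
-/

open Set Metric

noncomputable section

/-- A set is *nearly convex* if it lies between a convex set and its closure. -/
def NearlyConvex {E : Type*} [NormedAddCommGroup E] [NormedSpace ℝ E] (s : Set E) : Prop :=
  ∃ C : Set E, Convex ℝ C ∧ C ⊆ s ∧ s ⊆ closure C

/-- The *relative interior* of a set: points `a ∈ s` admitting `δ > 0` with
`B(a,δ) ∩ aff s ⊆ s`. -/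
def ri {E : Type*} [NormedAddCommGroup E] [NormedSpace ℝ E] (s : Set E) : Set E :=
  {a | a ∈ s ∧ ∃ δ > 0, Metric.ball a δ ∩ (affineSpan ℝ s : Set E) ⊆ s}

/-- The graph of a set-valued mapping. -/
def gph {E P : Type*} (F : E → Set P) : Set (E × P) := {q | q.2 ∈ F q.1}

/-- The domain of a set-valued mapping. -/
def domSV {E P : Type*} (F : E → Set P) : Set E := {x | (F x).Nonempty}

open Filter Topology

lemma domSV_eq_image {X Y : Type*} (F : X → Set Y) : domSV F = Prod.fst '' gph F := by
  ext x
  simp [domSV, gph, Set.Nonempty]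

lemma gph_inv_eq_image {X Y : Type*} (F : X → Set Y) :
    gph (fun y => {x | y ∈ F x}) = Prod.swap '' gph F := by
  ext ⟨y, x⟩
  simp [gph]

lemma domSV_inv {X Y : Type*} (F : X → Set Y) : domSV (fun y => {x | y ∈ F x}) = ⋃ x, F x := by
  ext y
  simp [domSV, Set.Nonempty]

lemma mem_gph_comp {X Y Z : Type*} {F : X → Set Y} {G : Y → Set Z} {x : X} {z : Z} :
    (x, z) ∈ gph (fun x => ⋃ y ∈ F x, G y) ↔ ∃ y, (x, y) ∈ gph F ∧ (y, z) ∈ gph G := by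
  simp [gph]

section General

variable {E : Type*} [NormedAddCommGroup E] [NormedSpace ℝ E]

lemma ri_subset (s : Set E) : ri s ⊆ s := fun _ h => h.1

lemma prolong_eq_lineMap (a x : E) (t : ℝ) : a + t • (a - x) = AffineMap.lineMap a x (-t) := by
  rw [AffineMap.lineMap_apply]
  simp only [vsub_eq_sub, vadd_eq_add]
  module

/-- From a relative interior point of any set, segments can be prolonged a little within the set. -/
lemma eventually_prolong {s : Set E} {a x : E} (ha : a ∈ ri s) (hx : x ∈ s) :
    ∀ᶠ t : ℝ in 𝓝[>] 0, a + t • (a - x) ∈ s := by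
  obtain ⟨has, δ, hδ, hb⟩ := ha
  have hc : Tendsto (fun t : ℝ => a + t • (a - x)) (𝓝 0) (𝓝 a) := by
    have : Continuous (fun t : ℝ => a + t • (a - x)) := by fun_prop
    simpa using this.tendsto 0
  have := (hc.eventually (Metric.ball_mem_nhds a hδ)).filter_mono
    (nhdsWithin_le_nhds (s := Set.Ioi (0 : ℝ)))
  filter_upwards [this] with t ht
  refine hb ⟨ht, ?_⟩
  rw [prolong_eq_lineMap]
  exact AffineMap.lineMap_mem _ (subset_affineSpan ℝ s has) (subset_affineSpan ℝ s hx)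

lemma exists_prolong {s : Set E} {a x : E} (ha : a ∈ ri s) (hx : x ∈ s) :
    ∃ t : ℝ, 0 < t ∧ a + t • (a - x) ∈ s := by
  obtain ⟨t, ht, h0⟩ := ((eventually_prolong ha hx).and self_mem_nhdsWithin).exists
  exact ⟨t, h0, ht⟩

/-- A point is recovered as a convex combination from its prolongation `a + t • (a - w)` away
from `w`, with weight `t / (1 + t)` on `w`. -/
lemma combo_prolong (a w : E) {t : ℝ} (ht : 0 < t) :
    (1 - t / (1 + t)) • (a + t • (a - w)) + (t / (1 + t)) • w = a := by
  have h : (1 + t) ≠ 0 := by positivity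
  match_scalars <;> field_simp <;> ring

lemma weight_mem {t : ℝ} (ht : 0 < t) : 0 < t / (1 + t) ∧ t / (1 + t) ≤ 1 := by
  refine ⟨by positivity, ?_⟩
  rw [div_le_one (by positivity)]
  linarith

lemma tendsto_combo (v w : E) :
    Tendsto (fun t : ℝ => (1 - t) • v + t • w) (𝓝[>] 0) (𝓝 v) := by
  have : Continuous (fun t : ℝ => (1 - t) • v + t • w) := by fun_prop
  simpa using (this.tendsto 0).mono_left (nhdsWithin_le_nhds (s := Set.Ioi (0 : ℝ)))

variable {P : Type*} [NormedAddCommGroup P] [NormedSpace ℝ P]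

lemma NearlyConvex.image {s : Set E} (hs : NearlyConvex s) (A : E →L[ℝ] P) :
    NearlyConvex (A '' s) := by
  obtain ⟨C, hC, h1, h2⟩ := hs
  exact ⟨A '' C, hC.linear_image A.toLinearMap, Set.image_mono h1,
    (Set.image_mono h2).trans (image_closure_subset_closure_image A.continuous)⟩

lemma nearlyConvex_gph_inv {F : E → Set P} (hF : NearlyConvex (gph F)) :
    NearlyConvex (gph (fun y => {x | y ∈ F x})) := by
  rw [gph_inv_eq_image]
  exact hF.image (ContinuousLinearEquiv.prodComm ℝ E P : E × P →L[ℝ] P × E)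

variable [FiniteDimensional ℝ E]

lemma closure_subset_affineSpan (C : Set E) : closure C ⊆ (affineSpan ℝ C : Set E) :=
  closure_minimal (subset_affineSpan ℝ C) (AffineSubspace.closed_of_finiteDimensional _)

lemma affineSpan_eq_of_subset_closure {C s : Set E} (h1 : C ⊆ s) (h2 : s ⊆ closure C) :
    affineSpan ℝ s = affineSpan ℝ C :=
  le_antisymm (affineSpan_le.2 (h2.trans (closure_subset_affineSpan C))) (affineSpan_mono ℝ h1)

lemma ri_nonempty_of_convex {C : Set E} (hC : Convex ℝ C) (hne : C.Nonempty) :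
    (ri C).Nonempty := by
  obtain ⟨x, hx⟩ := hne.intrinsicInterior hC
  obtain ⟨y, hy, rfl⟩ := mem_intrinsicInterior.1 hx
  obtain ⟨δ, hδ, hb⟩ := Metric.isOpen_iff.1 isOpen_interior y hy
  refine ⟨y, intrinsicInterior_subset hx, δ, hδ, ?_⟩
  rintro z ⟨hz, hzs⟩
  exact interior_subset (s := ((↑) ⁻¹' C : Set (affineSpan ℝ C))) (hb (a := ⟨z, hzs⟩) hz)

lemma combo_mem_ri_of_convex {C : Set E} (hC : Convex ℝ C) {v w : E} (hw : w ∈ ri C)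
    (hv : v ∈ closure C) {t : ℝ} (ht : 0 < t) (ht1 : t ≤ 1) :
    (1 - t) • v + t • w ∈ ri C := by
  obtain ⟨hwC, δ, hδ, hb⟩ := hw
  have key : Metric.ball ((1 - t) • v + t • w) (t * δ / 2) ∩ (affineSpan ℝ C : Set E) ⊆ C := by
    rintro z ⟨hz, hzs⟩
    obtain ⟨c, hcC, hc⟩ := Metric.mem_closure_iff.1 hv (t * δ / 2) (by positivity)
    -- `w'` is chosen so that `z = (1 - t) • c + t • w'`; it is close to `w` when `c` is close to `v`
    set w' : E := AffineMap.lineMap c z (1 / t) with hw'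
    have hw'e : w' = (1 / t) • (z - c) + c := by
      rw [hw', AffineMap.lineMap_apply]; simp
    have hw's : w' ∈ (affineSpan ℝ C : Set E) :=
      AffineMap.lineMap_mem _ (subset_affineSpan ℝ C hcC) hzs
    have hw'C : w' ∈ C := by
      refine hb ⟨?_, hw's⟩
      have e : w' - w = (1 / t) • ((z - ((1 - t) • v + t • w)) + (1 - t) • (v - c)) := by
        rw [hw'e]
        match_scalars <;> field_simp <;> ring
      rw [mem_ball_iff_norm] at hz ⊢
      rw [dist_eq_norm] at hc
      rw [e, norm_smul, Real.norm_of_nonneg (by positivity)]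
      have h1 : ‖(z - ((1 - t) • v + t • w)) + (1 - t) • (v - c)‖ < t * δ := by
        refine (norm_add_le _ _).trans_lt ?_
        rw [norm_smul, Real.norm_of_nonneg (by linarith)]
        nlinarith [norm_nonneg (v - c)]
      calc 1 / t * ‖(z - ((1 - t) • v + t • w)) + (1 - t) • (v - c)‖ < 1 / t * (t * δ) := by
            gcongr
        _ = δ := by field_simp
    have hzc : z = (1 - t) • c + t • w' := by
      rw [hw'e]
      match_scalars <;> field_simp <;> ring
    rw [hzc]
    exact hC hcC hw'C (by linarith) ht.le (by ring)
  refine ⟨key ⟨Metric.mem_ball_self (by positivity), ?_⟩, t * δ / 2, by positivity, key⟩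
  exact (affineSpan ℝ C).convex (closure_subset_affineSpan C hv) (subset_affineSpan ℝ C hwC)
    (by linarith) ht.le (by ring)

lemma ri_eq_ri_of_convex {C s : Set E} (hC : Convex ℝ C) (h1 : C ⊆ s) (h2 : s ⊆ closure C) :
    ri s = ri C := by
  apply Set.Subset.antisymm
  · intro a ha
    have hne : C.Nonempty := closure_nonempty_iff.1 ⟨a, h2 ha.1⟩
    obtain ⟨w, hw⟩ := ri_nonempty_of_convex hC hne
    obtain ⟨t, ht, hv⟩ := exists_prolong ha (h1 hw.1)
    rw [← combo_prolong a w ht]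
    exact combo_mem_ri_of_convex hC hw (h2 hv) (weight_mem ht).1 (weight_mem ht).2
  · rintro a ⟨ha, δ, hδ, hb⟩
    refine ⟨h1 ha, δ, hδ, ?_⟩
    rw [affineSpan_eq_of_subset_closure h1 h2]
    exact hb.trans h1

lemma NearlyConvex.ri_nonempty {s : Set E} (hs : NearlyConvex s) (hne : s.Nonempty) :
    (ri s).Nonempty := by
  obtain ⟨C, hC, h1, h2⟩ := hs
  rw [ri_eq_ri_of_convex hC h1 h2]
  exact ri_nonempty_of_convex hC (closure_nonempty_iff.1 (hne.mono h2))

lemma combo_mem_ri {s : Set E} (hs : NearlyConvex s) {v w : E} (hw : w ∈ ri s) (hv : v ∈ s)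
    {t : ℝ} (ht : 0 < t) (ht1 : t ≤ 1) : (1 - t) • v + t • w ∈ ri s := by
  obtain ⟨C, hC, h1, h2⟩ := hs
  rw [ri_eq_ri_of_convex hC h1 h2] at hw ⊢
  exact combo_mem_ri_of_convex hC hw (h2 hv) ht ht1

lemma mem_ri_of_prolong {s : Set E} (hs : NearlyConvex s) {a : E} (ha : a ∈ s)
    (h : ∀ x ∈ s, ∃ t : ℝ, 0 < t ∧ a + t • (a - x) ∈ s) : a ∈ ri s := by
  obtain ⟨w, hw⟩ := hs.ri_nonempty ⟨a, ha⟩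
  obtain ⟨t, ht, hv⟩ := h w hw.1
  rw [← combo_prolong a w ht]
  exact combo_mem_ri hs hw hv (weight_mem ht).1 (weight_mem ht).2

variable [FiniteDimensional ℝ P]

lemma ri_image {s : Set E} (hs : NearlyConvex s) (A : E →L[ℝ] P) :
    ri (A '' s) = A '' ri s := by
  apply Set.Subset.antisymm
  · intro a ha
    obtain ⟨w, hw⟩ := hs.ri_nonempty (Set.image_nonempty.1 ⟨a, ha.1⟩)
    obtain ⟨t, ht, v, hv, hva⟩ := exists_prolong ha (Set.mem_image_of_mem A hw.1)
    refine ⟨_, combo_mem_ri hs hw hv (weight_mem ht).1 (weight_mem ht).2, ?_⟩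
    rw [map_add, map_smul, map_smul, hva, combo_prolong a (A w) ht]
  · rintro _ ⟨b, hb, rfl⟩
    refine mem_ri_of_prolong (hs.image A) (Set.mem_image_of_mem A hb.1) ?_
    rintro _ ⟨x, hx, rfl⟩
    obtain ⟨t, ht, hv⟩ := exists_prolong hb hx
    exact ⟨t, ht, _, hv, by simp⟩

lemma ri_domSV {F : E → Set P} (hF : NearlyConvex (gph F)) :
    ri (domSV F) = Prod.fst '' ri (gph F) := by
  rw [domSV_eq_image]
  exact ri_image hF (ContinuousLinearMap.fst ℝ E P)

/-- Over a point `x ∈ ri (domSV F)` the values of a nearly convex mapping are nearly convex: the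
slice over `x` contains a relative interior point `(x, w)` of the graph, towards which every point
of the slice can be moved into the convex set approximating the graph. -/
lemma nearlyConvex_slice {F : E → Set P} (hF : NearlyConvex (gph F)) {x : E} {w : P}
    (hw : (x, w) ∈ ri (gph F)) : NearlyConvex (F x) := by
  have hF' := hF
  obtain ⟨C, hC, h1, h2⟩ := hF
  refine ⟨{y | (x, y) ∈ C}, ?_, fun y hy => h1 hy, ?_⟩
  · intro y hy y' hy' a b ha hb hab
    have := hC hy hy' ha hb hab
    simpa [← add_smul, hab] using this
  · intro v hv
    refine mem_closure_of_tendsto (tendsto_combo v w) ?_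
    filter_upwards [Ioc_mem_nhdsGT (zero_lt_one (α := ℝ))] with t ht
    have := combo_mem_ri hF' hw (v := (x, v)) hv ht.1 ht.2
    rw [ri_eq_ri_of_convex hC h1 h2] at this
    simpa [← add_smul] using this.1

lemma mem_ri_gph_iff {F : E → Set P} (hF : NearlyConvex (gph F)) (x : E) (y : P) :
    (x, y) ∈ ri (gph F) ↔ x ∈ ri (domSV F) ∧ y ∈ ri (F x) := by
  rw [ri_domSV hF]
  constructor
  · intro h
    refine ⟨⟨_, h, rfl⟩, mem_ri_of_prolong (nearlyConvex_slice hF h) h.1 fun v hv => ?_⟩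
    obtain ⟨t, ht, hm⟩ := exists_prolong h (x := (x, v)) hv
    exact ⟨t, ht, by simpa [gph] using hm⟩
  · rintro ⟨⟨⟨_, w⟩, hw, rfl⟩, hy⟩
    obtain ⟨t, ht, hm⟩ := exists_prolong hy hw.1
    have := combo_mem_ri hF hw (v := (_, y + t • (y - w))) hm (weight_mem ht).1 (weight_mem ht).2
    simpa only [Prod.smul_mk, Prod.mk_add_mk, combo_prolong y w ht, ← add_smul,
      sub_add_cancel, one_smul] using this

lemma mem_ri_gph_inv_iff {F : E → Set P} (hF : NearlyConvex (gph F)) (x : E) (y : P) :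
    (y, x) ∈ ri (gph (fun y => {x | y ∈ F x})) ↔ (x, y) ∈ ri (gph F) := by
  have : ri (Prod.swap '' gph F) = Prod.swap '' ri (gph F) :=
    ri_image hF (ContinuousLinearEquiv.prodComm ℝ E P : E × P →L[ℝ] P × E)
  rw [gph_inv_eq_image, this]
  simp

/-- The slice description of `ri (gph F)` along the second factor. -/
lemma mem_ri_gph_iff' {F : E → Set P} (hF : NearlyConvex (gph F)) (x : E) (y : P) :
    (x, y) ∈ ri (gph F) ↔ y ∈ ri (⋃ x, F x) ∧ x ∈ ri {x | y ∈ F x} := by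
  rw [← mem_ri_gph_inv_iff hF, mem_ri_gph_iff (nearlyConvex_gph_inv hF), domSV_inv]

variable {Q : Type*} [NormedAddCommGroup Q] [NormedSpace ℝ Q] [FiniteDimensional ℝ Q]

lemma nearlyConvex_gph_comp {F : E → Set P} {G : P → Set Q} (hF : NearlyConvex (gph F))
    (hG : NearlyConvex (gph G)) {x₀ : E} {y₀ : P} {z₀ : Q} (h₁ : (x₀, y₀) ∈ ri (gph F))
    (h₂ : (y₀, z₀) ∈ ri (gph G)) : NearlyConvex (gph (fun x => ⋃ y ∈ F x, G y)) := by
  have hF' := hF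
  have hG' := hG
  obtain ⟨C, hC, hC1, hC2⟩ := hF
  obtain ⟨D, hD, hD1, hD2⟩ := hG
  refine ⟨{r | ∃ y, (r.1, y) ∈ C ∧ (y, r.2) ∈ D}, ?_, ?_, ?_⟩
  · rintro r ⟨y, hy1, hy2⟩ r' ⟨y', hy1', hy2'⟩ a b ha hb hab
    exact ⟨a • y + b • y', hC hy1 hy1' ha hb hab, hD hy2 hy2' ha hb hab⟩
  · rintro ⟨x, z⟩ ⟨y, hy1, hy2⟩
    exact mem_gph_comp.2 ⟨y, hC1 hy1, hD1 hy2⟩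
  · rintro ⟨x, z⟩ h
    obtain ⟨y, hy1, hy2⟩ := mem_gph_comp.1 h
    refine mem_closure_of_tendsto (tendsto_combo (x, z) (x₀, z₀)) ?_
    filter_upwards [Ioc_mem_nhdsGT (zero_lt_one (α := ℝ))] with t ht
    have e1 := combo_mem_ri hF' h₁ hy1 ht.1 ht.2
    have e2 := combo_mem_ri hG' h₂ hy2 ht.1 ht.2
    rw [ri_eq_ri_of_convex hC hC1 hC2] at e1
    rw [ri_eq_ri_of_convex hD hD1 hD2] at e2
    exact ⟨(1 - t) • y + t • y₀, e1.1, e2.1⟩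

/-- If some `(x₀, y₀) ∈ ri (gph F)` and `(y₀, z₀) ∈ ri (gph G)` are linked, the relative interior of
the graph of the composition is the composition of the relative interiors of the graphs. -/
lemma mem_ri_gph_comp_iff {F : E → Set P} {G : P → Set Q} (hF : NearlyConvex (gph F))
    (hG : NearlyConvex (gph G)) {x₀ : E} {y₀ : P} {z₀ : Q} (h₁ : (x₀, y₀) ∈ ri (gph F))
    (h₂ : (y₀, z₀) ∈ ri (gph G)) (x : E) (z : Q) :
    (x, z) ∈ ri (gph (fun x => ⋃ y ∈ F x, G y)) ↔
      ∃ y, (x, y) ∈ ri (gph F) ∧ (y, z) ∈ ri (gph G) := by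
  constructor
  · intro h
    obtain ⟨t, ht, hm⟩ := exists_prolong h (mem_gph_comp.2 ⟨y₀, h₁.1, h₂.1⟩)
    obtain ⟨y, hy1, hy2⟩ := mem_gph_comp.1 hm
    have e1 := combo_mem_ri hF h₁ hy1 (weight_mem ht).1 (weight_mem ht).2
    have e2 := combo_mem_ri hG h₂ hy2 (weight_mem ht).1 (weight_mem ht).2
    simp only [Prod.smul_mk, Prod.mk_add_mk, Prod.smul_fst,
      Prod.smul_snd, Prod.fst_sub, Prod.snd_sub, combo_prolong _ _ ht] at e1 e2
    exact ⟨_, e1, e2⟩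
  · rintro ⟨y, hy1, hy2⟩
    refine mem_ri_of_prolong (nearlyConvex_gph_comp hF hG h₁ h₂)
      (mem_gph_comp.2 ⟨y, hy1.1, hy2.1⟩) ?_
    rintro ⟨x', z'⟩ hr
    obtain ⟨y', hy1', hy2'⟩ := mem_gph_comp.1 hr
    -- a common `t` prolongs both segments, so their middle components agree
    obtain ⟨t, ⟨e1, e2⟩, ht⟩ := (((eventually_prolong hy1 hy1').and
      (eventually_prolong hy2 hy2')).and self_mem_nhdsWithin).exists
    exact ⟨t, ht, mem_gph_comp.2 ⟨y + t • (y - y'), e1, e2⟩⟩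

end General

theorem ri_gph_comp (n p q : ℕ)
    (F : EuclideanSpace ℝ (Fin n) → Set (EuclideanSpace ℝ (Fin p)))
    (G : EuclideanSpace ℝ (Fin p) → Set (EuclideanSpace ℝ (Fin q)))
    (hF : NearlyConvex (gph F)) (hG : NearlyConvex (gph G))
    (hqc : (ri (⋃ x, F x) ∩ ri (domSV G)).Nonempty) :
    ri (gph (fun x => ⋃ y ∈ F x, G y)) =
      {r : EuclideanSpace ℝ (Fin n) × EuclideanSpace ℝ (Fin q) |
        r.1 ∈ ri (domSV F) ∧ r.2 ∈ ri (⋃ y, G y) ∧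
          (ri (F r.1) ∩ ri {y | r.2 ∈ G y}).Nonempty} := by
  obtain ⟨y₀, hy1, hy2⟩ := hqc
  rw [← domSV_inv, ri_domSV (nearlyConvex_gph_inv hF)] at hy1
  rw [ri_domSV hG] at hy2
  obtain ⟨⟨_, x₀⟩, h₁, rfl⟩ := hy1
  obtain ⟨⟨_, z₀⟩, h₂, rfl⟩ := hy2
  rw [mem_ri_gph_inv_iff hF] at h₁
  ext ⟨x, z⟩
  rw [mem_ri_gph_comp_iff hF hG h₁ h₂]
  simp only [mem_ri_gph_iff hF, mem_ri_gph_iff' hG, Set.mem_ofPred_eq]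
  constructor
  · rintro ⟨y, ⟨hx, hy⟩, hz, hy'⟩
    exact ⟨hx, hz, y, hy, hy'⟩
  · rintro ⟨hx, hz, y, hy, hy'⟩
    exact ⟨y, ⟨hx, hy⟩, hz, hy'⟩
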